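/- Let η : ℝ³ → ℝ³ be a C² map whose Jacobian ∇η(x) (entries ∂_l η_i) is invertible at every x, let A := (∇η)⁻¹, and define ∂_i^η g := ∑_k A_{ki} ∂_k g. Then for every C² function f : ℝ³ → ℝ and all indices i, j ∈ {1,2,3}: ∂_j(∂_i^η f) − ∂_i^η(∂_j f) = −∑_{l=1}^{3} (∂_i^η (∂_j η_l)) · (∂_l^η f) at every point. -/

import Mathlib

open scoped Matrix BigOperators

/-- Partial derivative `∂_l f` of a scalar function on `ℝ³`. -/
noncomputable def pd (f : (Fin 3 → ℝ) → ℝ) (l : Fin 3) (x : Fin 3 → ℝ) : ℝ :=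
  fderiv ℝ f x (Pi.single l 1)

/-- Jacobian matrix `∇η` with entries `(∇η)_{il} = ∂_l η_i`. -/
noncomputable def Jac (η : (Fin 3 → ℝ) → Fin 3 → ℝ) (x : Fin 3 → ℝ) :
    Matrix (Fin 3) (Fin 3) ℝ :=
  Matrix.of fun i l => pd (fun y => η y i) l x

/-- Transformed derivative `∂_i^η g = ∑_k A_{ki} ∂_k g`, where `A = (∇η)⁻¹`. -/
noncomputable def Deta (η : (Fin 3 → ℝ) → Fin 3 → ℝ) (f : (Fin 3 → ℝ) → ℝ)
    (i : Fin 3) (x : Fin 3 → ℝ) : ℝ :=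
  ∑ k, (Jac η x)⁻¹ k i * pd f k x

theorem pd_contDiff (f : (Fin 3 → ℝ) → ℝ) (hf : ContDiff ℝ 2 f) (l : Fin 3) :
    ContDiff ℝ 1 (fun y => pd f l y) := by
  unfold pd
  exact (hf.fderiv_right (m := 1) (by norm_num)).clm_apply contDiff_const

theorem pd_comm (f : (Fin 3 → ℝ) → ℝ) (hf : ContDiff ℝ 2 f) (l m : Fin 3) (x : Fin 3 → ℝ) :
    pd (fun y => pd f l y) m x = pd (fun y => pd f m y) l x := by
  have hd : DifferentiableAt ℝ (fderiv ℝ f) x :=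
    (hf.fderiv_right (m := 1) (by norm_num)).differentiable (by norm_num) x
  have hs : IsSymmSndFDerivAt ℝ f x :=
    hf.contDiffAt.isSymmSndFDerivAt (by simp)
  have key : ∀ a b : Fin 3, pd (fun y => pd f a y) b x
      = fderiv ℝ (fderiv ℝ f) x (Pi.single b 1) (Pi.single a 1) := by
    intro a b
    unfold pd
    rw [fderiv_clm_apply hd (by fun_prop)]
    simp
  rw [key, key]
  exact hs _ _

theorem det_diff (M : (Fin 3 → ℝ) → Matrix (Fin 3) (Fin 3) ℝ)
    (hM : ∀ a b, Differentiable ℝ (fun y => M y a b)) :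
    Differentiable ℝ (fun y => (M y).det) := by
  simp only [Matrix.det_fin_three]
  fun_prop

theorem inv_diff (M : (Fin 3 → ℝ) → Matrix (Fin 3) (Fin 3) ℝ)
    (hM : ∀ a b, Differentiable ℝ (fun y => M y a b)) (hu : ∀ y, IsUnit (M y)) (a b : Fin 3) :
    Differentiable ℝ (fun y => (M y)⁻¹ a b) := by
  have h0 : ∀ y, (M y).det ≠ 0 := fun y =>
    ((Matrix.isUnit_iff_isUnit_det _).1 (hu y)).ne_zero
  simp only [Matrix.inv_def, Ring.inverse_eq_inv', Matrix.smul_apply, smul_eq_mul,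
    Matrix.adjugate_apply]
  refine ((det_diff M hM).inv h0).mul (det_diff _ fun c d => ?_)
  by_cases h : c = b
  · subst h; simp
  · simpa [Matrix.updateRow_ne h] using hM c d

theorem pd_sum_mul (u v : Fin 3 → (Fin 3 → ℝ) → ℝ) (hu : ∀ k, Differentiable ℝ (u k))
    (hv : ∀ k, Differentiable ℝ (v k)) (j : Fin 3) (x : Fin 3 → ℝ) :
    pd (fun y => ∑ k, u k y * v k y) j x
      = ∑ k, (pd (u k) j x * v k x + u k x * pd (v k) j x) := by
  unfold pd
  rw [fderiv_fun_sum (fun k _ => ((hu k) x).fun_mul ((hv k) x))]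
  rw [ContinuousLinearMap.sum_apply]
  refine Finset.sum_congr rfl fun k _ => ?_
  rw [fderiv_fun_mul ((hu k) x) ((hv k) x)]
  simp
  ring

/-- Second commutator identity of Lemma 2.1:
`[∂_j, ∂_i^η] f = −(∂_i^η ∂_j η_l) ∂_l^η f` (summation over `l`). -/
theorem commutator_pd_Deta
    (η : (Fin 3 → ℝ) → Fin 3 → ℝ) (hη : ContDiff ℝ 2 η)
    (hinv : ∀ x, IsUnit (Jac η x))
    (f : (Fin 3 → ℝ) → ℝ) (hf : ContDiff ℝ 2 f)
    (i j : Fin 3) (x : Fin 3 → ℝ) :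
    pd (fun y => Deta η f i y) j x - Deta η (fun y => pd f j y) i x
      = -∑ l, Deta η (fun y => pd (fun z => η z l) j y) i x * Deta η f l x := by
  have hηl : ∀ l, ContDiff ℝ 2 (fun z => η z l) := fun l => contDiff_pi.1 hη l
  have hJ : ∀ a b, Differentiable ℝ (fun y => Jac η y a b) := fun a b =>
    (pd_contDiff _ (hηl a) b).differentiable (by norm_num)
  have hA := inv_diff (fun y => Jac η y) hJ hinv
  have hf1 : ∀ k, Differentiable ℝ (fun y => pd f k y) := fun k =>
    (pd_contDiff f hf k).differentiable (by norm_num)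
  have hdet : IsUnit (Jac η x).det := (Matrix.isUnit_iff_isUnit_det _).1 (hinv x)
  let J' : Matrix (Fin 3) (Fin 3) ℝ := Matrix.of fun a b => pd (fun y => Jac η y a b) j x
  let A' : Matrix (Fin 3) (Fin 3) ℝ := Matrix.of fun a b => pd (fun y => (Jac η y)⁻¹ a b) j x
  have h1 : J' * (Jac η x)⁻¹ + Jac η x * A' = 0 := by
    ext a b
    have h := pd_sum_mul (fun k y => Jac η y a k) (fun k y => (Jac η y)⁻¹ k b)
      (fun k => hJ a k) (fun k => hA k b) j x
    have hc : (fun y => ∑ k, Jac η y a k * (Jac η y)⁻¹ k b)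
        = fun _ => (1 : Matrix (Fin 3) (Fin 3) ℝ) a b := by
      funext y
      rw [← Matrix.mul_apply, Matrix.mul_nonsing_inv _
        ((Matrix.isUnit_iff_isUnit_det _).1 (hinv y))]
    rw [hc, Finset.sum_add_distrib] at h
    have h0 : pd (fun _ => (1 : Matrix (Fin 3) (Fin 3) ℝ) a b) j x = 0 := by simp [pd]
    rw [h0] at h
    simp only [Matrix.add_apply, Matrix.mul_apply, Matrix.zero_apply]
    exact h.symm
  have h2 : A' = -((Jac η x)⁻¹ * (J' * (Jac η x)⁻¹)) := by
    have h3 : Jac η x * A' = -(J' * (Jac η x)⁻¹) := eq_neg_of_add_eq_zero_right h1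
    rw [← Matrix.mul_neg, ← h3, Matrix.nonsing_inv_mul_cancel_left _ _ hdet]
  have h4 : ∀ k, pd (fun y => (Jac η y)⁻¹ k i) j x
      = -∑ l, (Jac η x)⁻¹ k l * ∑ m, pd (fun y => pd (fun z => η z l) j y) m x
          * (Jac η x)⁻¹ m i := by
    intro k
    have h5 := congrFun (congrFun h2 k) i
    simp only [Matrix.neg_apply, Matrix.mul_apply] at h5
    refine h5.trans ?_
    congr 1
    refine Finset.sum_congr rfl fun l _ => ?_
    congr 1
    refine Finset.sum_congr rfl fun m _ => ?_
    congr 1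
    exact pd_comm _ (hηl l) m j x
  unfold Deta
  rw [pd_sum_mul (fun k y => (Jac η y)⁻¹ k i) (fun k y => pd f k y) (fun k => hA k i) hf1 j x]
  simp only [h4, pd_comm f hf _ j x]
  simp only [pd_comm f hf j _ x, Fin.sum_univ_three]
  ring
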